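/- Let a > 0. The sequence {e^{2an}}_{n≥1} is a complete interpolating sequence for the small Fock space F_a. -/

import Mathlib

open Filter MeasureTheory

/-- The weight `e^{-(log|w|)²/(2a)}` of the small Fock space. -/
noncomputable def fockWeight (a : ℝ) (w : ℂ) : ℝ :=
  Real.exp (-(Real.log ‖w‖) ^ 2 / (2 * a))

/-- The squared norm of `F` in the small Fock space `𝓕_a`:
`(1/(2√(2πa))) ∫_ℂ |F(w)|² e^{-(log|w|)²/(2a)} dm₂(w)` where `m₂ = (1/π)·`Lebesgue. -/
noncomputable def fockNormSq (a : ℝ) (F : ℂ → ℂ) : ℝ :=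
  (1 / (2 * Real.sqrt (2 * Real.pi * a))) *
    ∫ w : ℂ, ‖F w‖ ^ 2 * fockWeight a w / Real.pi

/-- Membership in the small Fock space `𝓕_a`: `F` is entire with finite `𝓕_a`-norm. -/
def MemFock (a : ℝ) (F : ℂ → ℂ) : Prop :=
  Differentiable ℂ F ∧ Integrable (fun w : ℂ => ‖F w‖ ^ 2 * fockWeight a w)

/-- `φ(w) = (log|w|)²/(4a)`. -/
noncomputable def fockPhi (a : ℝ) (w : ℂ) : ℝ := (Real.log ‖w‖) ^ 2 / (4 * a)

/-- The sampling weight `(1+|w|²) e^{-2φ(w)}`. -/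
noncomputable def fockSampleWeight (a : ℝ) (w : ℂ) : ℝ :=
  (1 + ‖w‖ ^ 2) * Real.exp (-2 * fockPhi a w)

/-- `{w_n}_{n≥1}` is a sampling sequence for `𝓕_a`. -/
def FockSampling (a : ℝ) (w : ℕ → ℂ) : Prop :=
  ∃ A > 0, ∃ B > 0, ∀ F : ℂ → ℂ, MemFock a F →
    A * fockNormSq a F ≤
        (∑' n : {n : ℕ // 1 ≤ n}, fockSampleWeight a (w n) * ‖F (w n)‖ ^ 2) ∧
    (∑' n : {n : ℕ // 1 ≤ n}, fockSampleWeight a (w n) * ‖F (w n)‖ ^ 2) ≤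
        B * fockNormSq a F

/-- `{w_n}_{n≥1}` is an interpolating sequence for `𝓕_a`. -/
def FockInterpolating (a : ℝ) (w : ℕ → ℂ) : Prop :=
  ∀ v : ℕ → ℂ,
    Summable (fun n : {n : ℕ // 1 ≤ n} => fockSampleWeight a (w n) * ‖v n‖ ^ 2) →
    ∃ F : ℂ → ℂ, MemFock a F ∧ ∀ n : ℕ, 1 ≤ n → F (w n) = v n

/-- `{w_n}_{n≥1}` is a complete interpolating sequence for `𝓕_a`. -/
def FockCIS (a : ℝ) (w : ℕ → ℂ) : Prop :=
  FockSampling a w ∧ FockInterpolating a w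

open ComplexConjugate

lemma fk_orth (k j : ℕ) :
    ∫ θ in (-Real.pi)..Real.pi, Complex.exp (Complex.I * k * θ) * conj (Complex.exp (Complex.I * j * θ))
      = if k = j then (2 * Real.pi : ℂ) else 0 := by
  have h1 : ∀ θ : ℝ, Complex.exp (Complex.I * k * θ) * conj (Complex.exp (Complex.I * j * θ))
      = Complex.exp ((Complex.I * (k - j)) * θ) := by
    intro θ
    rw [← Complex.exp_conj, ← Complex.exp_add]
    congr 1
    simp
    ring
  simp_rw [h1]
  split_ifs with h
  · subst h
    simp
    ring
  · have hne : (Complex.I * ((k : ℂ) - j)) ≠ 0 := by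
      refine mul_ne_zero Complex.I_ne_zero (sub_ne_zero.2 ?_)
      exact_mod_cast h
    rw [integral_exp_mul_complex hne]
    have : Complex.exp (Complex.I * (k - j) * (Real.pi : ℝ)) = Complex.exp (Complex.I * (k - j) * ((-Real.pi : ℝ) : ℂ)) := by
      rw [Complex.exp_eq_exp_iff_exists_int]
      refine ⟨(k : ℤ) - j, ?_⟩
      push_cast
      ring
    rw [this]
    simp

lemma fk_norm_exp (k : ℕ) (θ : ℝ) : ‖Complex.exp (Complex.I * k * θ)‖ = 1 := by
  rw [Complex.norm_exp]
  simp

lemma fk_parseval (u : ℕ → ℂ) (hu : Summable fun k => ‖u k‖) :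
    ∫ θ in (-Real.pi)..Real.pi, ‖∑' k, u k * Complex.exp (Complex.I * k * θ)‖ ^ 2
      = 2 * Real.pi * ∑' k, ‖u k‖ ^ 2 := by
  set f : ℝ → ℂ := fun θ => ∑' k, u k * Complex.exp (Complex.I * k * θ) with hf
  have hsum : ∀ θ : ℝ, HasSum (fun k : ℕ => u k * Complex.exp (Complex.I * k * θ)) (f θ) := by
    intro θ
    refine Summable.hasSum (Summable.of_norm ?_)
    simpa [fk_norm_exp] using hu
  have hcont : Continuous f := by
    refine continuous_tsum (u := fun k => ‖u k‖) (fun k => by fun_prop) hu ?_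
    intro k θ
    simp [fk_norm_exp]
  have hbd : ∀ θ, ‖f θ‖ ≤ ∑' k, ‖u k‖ := by
    intro θ
    refine tsum_of_norm_bounded hu.hasSum ?_
    intro k
    simp [fk_norm_exp]
  have hinner : ∀ k : ℕ, ∫ θ in (-Real.pi)..Real.pi, Complex.exp (Complex.I * k * θ) * conj (f θ)
      = 2 * Real.pi * conj (u k) := by
    intro k
    have h := intervalIntegral.hasSum_integral_of_dominated_convergence (μ := volume)
      (a := -Real.pi) (b := Real.pi)
      (F := fun (j : ℕ) (θ : ℝ) => Complex.exp (Complex.I * k * θ) *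
          conj (u j * Complex.exp (Complex.I * j * θ)))
      (f := fun θ : ℝ => Complex.exp (Complex.I * k * θ) * conj (f θ))
      (bound := fun j _ => ‖u j‖)
      (fun j => Continuous.aestronglyMeasurable (by fun_prop))
      (fun j => Filter.Eventually.of_forall (fun θ _ => by
        rw [norm_mul, RCLike.norm_conj, norm_mul, fk_norm_exp, fk_norm_exp]; simp))
      (Filter.Eventually.of_forall (fun θ _ => hu))
      (by simp)
      (Filter.Eventually.of_forall (fun θ _ => by
        have := (hsum θ)
        have h2 := (Complex.hasSum_conj.2 (by simpa using this) :
          HasSum (fun j : ℕ => conj (u j * Complex.exp (Complex.I * j * θ))) (conj (f θ)))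
        exact h2.mul_left _))
    have h3 : ∀ j : ℕ, ∫ θ in (-Real.pi)..Real.pi, Complex.exp (Complex.I * k * θ) *
          conj (u j * Complex.exp (Complex.I * j * θ)) =
          if j = k then 2 * Real.pi * conj (u k) else 0 := by
      intro j
      have : ∀ θ : ℝ, Complex.exp (Complex.I * k * θ) *
          conj (u j * Complex.exp (Complex.I * j * θ)) = conj (u j) *
          (Complex.exp (Complex.I * k * θ) * conj (Complex.exp (Complex.I * j * θ))) := by
        intro θ
        rw [map_mul]
        ring
      simp_rw [this]
      rw [intervalIntegral.integral_const_mul, fk_orth]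
      by_cases hjk : j = k
      · subst hjk
        simp
        ring
      · simp [hjk, Ne.symm hjk]
    simp_rw [h3] at h
    exact h.unique (hasSum_ite_eq k _)
  have houter := intervalIntegral.hasSum_integral_of_dominated_convergence (μ := volume)
      (a := -Real.pi) (b := Real.pi)
      (F := fun (k : ℕ) (θ : ℝ) => u k * Complex.exp (Complex.I * k * θ) * conj (f θ))
      (f := fun θ : ℝ => f θ * conj (f θ))
      (bound := fun k _ => ‖u k‖ * ∑' k, ‖u k‖)
      (fun j => Continuous.aestronglyMeasurable (by fun_prop))
      (fun j => Filter.Eventually.of_forall (fun θ _ => by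
        rw [norm_mul, RCLike.norm_conj, norm_mul, fk_norm_exp, mul_one]
        exact mul_le_mul_of_nonneg_left (hbd θ) (norm_nonneg _)))
      (Filter.Eventually.of_forall (fun θ _ => hu.mul_right _))
      (by simp)
      (Filter.Eventually.of_forall (fun θ _ => (hsum θ).mul_right _))
  simp_rw [mul_assoc (u _)] at houter
  simp_rw [intervalIntegral.integral_const_mul, hinner] at houter
  have h5 : ∀ k, u k * (2 * Real.pi * conj (u k)) = ((2 * Real.pi * ‖u k‖ ^ 2 : ℝ) : ℂ) := by
    intro k
    have := Complex.mul_conj' (u k)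
    push_cast
    rw [← this]
    ring
  have h6 : ∀ θ, f θ * conj (f θ) = ((‖f θ‖ ^ 2 : ℝ) : ℂ) := by
    intro θ
    rw [Complex.mul_conj']
    push_cast; rfl
  simp_rw [h5, h6] at houter
  rw [intervalIntegral.integral_ofReal, Complex.hasSum_ofReal] at houter
  rw [← houter.tsum_eq, tsum_mul_left]

lemma fk_gauss (a : ℝ) (ha : 0 < a) (k j : ℕ) :
    Integrable (fun ξ : ℝ => Complex.exp (Complex.I * k * ξ) * conj (Complex.exp (Complex.I * j * ξ)) * (Real.exp (-ξ ^ 2 / (4 * a)) : ℝ)) ∧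
    ∫ ξ : ℝ, Complex.exp (Complex.I * k * ξ) * conj (Complex.exp (Complex.I * j * ξ)) * (Real.exp (-ξ ^ 2 / (4 * a)) : ℝ)
      = ((Real.sqrt (4 * Real.pi * a) * Real.exp (-a * ((k : ℝ) - j) ^ 2) : ℝ) : ℂ) := by
  have hg : Integrable (fun ξ : ℝ => Real.exp (-ξ ^ 2 / (4 * a))) := by
    have := integrable_exp_neg_mul_sq (b := 1 / (4 * a)) (by positivity)
    refine this.congr (Filter.Eventually.of_forall fun ξ => ?_)
    simp only
    congr 1
    ring
  constructor
  · refine Integrable.mono' hg (Continuous.aestronglyMeasurable (by fun_prop)) ?_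
    refine Filter.Eventually.of_forall fun ξ => ?_
    rw [norm_mul, norm_mul, RCLike.norm_conj, fk_norm_exp, fk_norm_exp, Complex.norm_real]
    simp
  · have h := fourierIntegral_gaussian (b := ((1 / (4 * a) : ℝ) : ℂ)) (by
      rw [Complex.ofReal_re]; positivity) ((k : ℂ) - j)
    have h2 : ∀ ξ : ℝ, Complex.exp (Complex.I * k * ξ) * conj (Complex.exp (Complex.I * j * ξ)) * (Real.exp (-ξ ^ 2 / (4 * a)) : ℝ)
       = Complex.exp (Complex.I * ((k : ℂ) - j) * ξ) * Complex.exp (-((1 / (4 * a) : ℝ) : ℂ) * (ξ : ℂ) ^ 2) := by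
      intro ξ
      rw [← Complex.exp_conj, Complex.ofReal_exp, ← Complex.exp_add, ← Complex.exp_add, ← Complex.exp_add]
      congr 1
      simp
      ring
    simp_rw [h2]
    rw [h]
    have h3 : ((Real.pi : ℂ) / ((1 / (4 * a) : ℝ) : ℂ)) = ((4 * Real.pi * a : ℝ) : ℂ) := by
      have : (a : ℂ) ≠ 0 := by exact_mod_cast ha.ne'
      push_cast
      field_simp
    rw [h3, Complex.ofReal_mul (Real.sqrt _)]
    congr 1
    · rw [Real.sqrt_eq_rpow, Complex.ofReal_cpow (by positivity)]
      norm_num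
    · rw [Complex.ofReal_exp]
      congr 1
      have : (a : ℂ) ≠ 0 := by exact_mod_cast ha.ne'
      push_cast
      field_simp

lemma fk_quad (a : ℝ) (ha : 0 < a) (s : Finset ℕ) (b : ℕ → ℂ) :
    2 * Real.pi * Real.exp (-Real.pi ^ 2 / (4 * a)) / Real.sqrt (4 * Real.pi * a) * ∑ k ∈ s, ‖b k‖ ^ 2 ≤
    (∑ k ∈ s, ∑ j ∈ s, b k * conj (b j) * (Real.exp (-a * ((k : ℝ) - j) ^ 2) : ℝ)).re := by
  classical
  set f : ℝ → ℂ := fun ξ => ∑ k ∈ s, b k * Complex.exp (Complex.I * k * ξ) with hf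
  have hfc : Continuous f := by fun_prop
  have hexp : ∀ ξ : ℝ, ((‖f ξ‖ ^ 2 * Real.exp (-ξ ^ 2 / (4 * a)) : ℝ) : ℂ) = 
     ∑ k ∈ s, ∑ j ∈ s, (b k * conj (b j)) * (Complex.exp (Complex.I * k * ξ) * conj (Complex.exp (Complex.I * j * ξ)) * (Real.exp (-ξ ^ 2 / (4 * a)) : ℝ)) := by
    intro ξ
    have := Complex.mul_conj' (f ξ)
    rw [Complex.ofReal_mul, Complex.ofReal_pow, ← this, hf]
    simp only [map_sum, map_mul]
    rw [Finset.sum_mul_sum, Finset.sum_mul]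
    refine Finset.sum_congr rfl fun k _ => ?_
    rw [Finset.sum_mul]
    refine Finset.sum_congr rfl fun j _ => ?_
    ring
  have hint : Integrable (fun ξ : ℝ => ‖f ξ‖ ^ 2 * Real.exp (-ξ ^ 2 / (4 * a))) := by
    have : Integrable (fun ξ : ℝ => ((‖f ξ‖ ^ 2 * Real.exp (-ξ ^ 2 / (4 * a)) : ℝ) : ℂ)) := by
      simp_rw [hexp]
      exact integrable_finsetSum _ fun k _ => integrable_finsetSum _ fun j _ =>
        (fk_gauss a ha k j).1.const_mul _
    exact this.re
  have hval : ((∫ ξ : ℝ, ‖f ξ‖ ^ 2 * Real.exp (-ξ ^ 2 / (4 * a)) : ℝ) : ℂ) =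
      Real.sqrt (4 * Real.pi * a) * ∑ k ∈ s, ∑ j ∈ s, b k * conj (b j) * (Real.exp (-a * ((k : ℝ) - j) ^ 2) : ℝ) := by
    rw [← integral_complex_ofReal]
    simp_rw [hexp]
    rw [integral_finsetSum _ fun k _ => integrable_finsetSum _ fun j _ =>
        (fk_gauss a ha k j).1.const_mul _, Finset.mul_sum]
    refine Finset.sum_congr rfl fun k _ => ?_
    rw [integral_finsetSum _ fun j _ => (fk_gauss a ha k j).1.const_mul _, Finset.mul_sum]
    refine Finset.sum_congr rfl fun j _ => ?_
    rw [integral_const_mul, (fk_gauss a ha k j).2]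
    push_cast
    ring
  have hpars : ∫ θ in (-Real.pi)..Real.pi, ‖f θ‖ ^ 2 = 2 * Real.pi * ∑ k ∈ s, ‖b k‖ ^ 2 := by
    have h := fk_parseval (fun k => if k ∈ s then b k else 0)
      (summable_of_ne_finset_zero (s := s) (fun k hk => by simp [hk]))
    have e1 : ∀ θ : ℝ, ∑' k : ℕ, (if k ∈ s then b k else 0) * Complex.exp (Complex.I * k * θ) = f θ := by
      intro θ
      rw [tsum_eq_sum (s := s) (fun k hk => by simp [hk])]
      exact Finset.sum_congr rfl fun k hk => by simp [hk]
    simp_rw [e1] at h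
    rw [h, tsum_eq_sum (s := s) (fun k hk => by simp [hk])]
    congr 1
    exact Finset.sum_congr rfl fun k hk => by simp [hk]
  have hlow : Real.exp (-Real.pi ^ 2 / (4 * a)) * ∫ θ in (-Real.pi)..Real.pi, ‖f θ‖ ^ 2 ≤ 
      ∫ ξ : ℝ, ‖f ξ‖ ^ 2 * Real.exp (-ξ ^ 2 / (4 * a)) := by
    rw [intervalIntegral.integral_of_le (by linarith [Real.pi_pos]), ← integral_const_mul]
    refine le_trans ?_ (setIntegral_le_integral (s := Set.Ioc (-Real.pi) Real.pi) hint
      (Filter.Eventually.of_forall fun ξ => by simp only [Pi.zero_apply]; positivity))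
    refine setIntegral_mono_on ?_ hint.integrableOn measurableSet_Ioc ?_
    · exact (Continuous.integrableOn_Icc (by fun_prop)).mono_set Set.Ioc_subset_Icc_self
    · intro x hx
      rw [mul_comm]
      refine mul_le_mul_of_nonneg_left (Real.exp_le_exp.2 ?_) (by positivity)
      gcongr ?_ / _
      have : x ^ 2 ≤ Real.pi ^ 2 := sq_le_sq' hx.1.le hx.2
      linarith
  have hsq : 0 < Real.sqrt (4 * Real.pi * a) := Real.sqrt_pos.2 (by have := Real.pi_pos; positivity)
  rw [hpars] at hlow
  have hre := congrArg Complex.re hval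
  rw [Complex.ofReal_re, Complex.re_ofReal_mul] at hre
  rw [hre] at hlow
  rw [div_mul_eq_mul_div, div_le_iff₀ hsq]
  linarith

lemma fk_radial (a : ℝ) (ha : 0 < a) (k : ℕ) :
    ∫⁻ r in Set.Ioi (0 : ℝ), ENNReal.ofReal (r ^ (2 * k + 1) * Real.exp (-(Real.log r) ^ 2 / (2 * a)))
      = ENNReal.ofReal (Real.sqrt (2 * Real.pi * a) * Real.exp (2 * a * ((k : ℝ) + 1) ^ 2)) := by
  have himg : Set.Ioi (0 : ℝ) = Real.exp '' Set.univ := by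
    rw [Set.image_univ, Real.range_exp]
  rw [himg, lintegral_image_eq_lintegral_abs_deriv_mul MeasurableSet.univ
    (fun x _ => (Real.hasDerivAt_exp x).hasDerivWithinAt) Real.exp_injective.injOn, setLIntegral_univ]
  have h1 : ∀ t : ℝ, ENNReal.ofReal |Real.exp t| * ENNReal.ofReal (Real.exp t ^ (2 * k + 1) *
      Real.exp (-(Real.log (Real.exp t)) ^ 2 / (2 * a))) =
      (fun t : ℝ => ENNReal.ofReal (Real.exp (2 * a * ((k : ℝ) + 1) ^ 2) * Real.exp (-(1 / (2 * a)) * t ^ 2))) (t - 2 * a * (k + 1)) := by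
    intro t
    simp only
    rw [abs_of_pos (Real.exp_pos t), ← ENNReal.ofReal_mul (Real.exp_pos t).le, Real.log_exp,
      ← Real.exp_nat_mul, ← Real.exp_add, ← Real.exp_add, ← Real.exp_add]
    congr 2
    push_cast
    field_simp
    ring
  simp_rw [h1]
  rw [lintegral_sub_right_eq_self (fun t : ℝ => ENNReal.ofReal (Real.exp (2 * a * ((k : ℝ) + 1) ^ 2) * Real.exp (-(1 / (2 * a)) * t ^ 2)))]
  rw [← ofReal_integral_eq_lintegral_ofReal]
  · rw [integral_const_mul, integral_gaussian, mul_comm]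
    congr 3
    field_simp
  · exact (integrable_exp_neg_mul_sq (by positivity)).const_mul _
  · exact Filter.Eventually.of_forall fun t => by simp only [Pi.zero_apply]; positivity

lemma fk_circle (c : ℕ → ℂ) (F : ℂ → ℂ) (hFc : Continuous F)
    (hF : ∀ z, HasSum (fun k => c k * z ^ k) (F z)) (r : ℝ) (hr : 0 < r) :
    ∫⁻ θ in Set.Ioo (-Real.pi) Real.pi, ENNReal.ofReal (‖F (Complex.polarCoord.symm (r, θ))‖ ^ 2)
      = ENNReal.ofReal (2 * Real.pi) * ∑' k, ENNReal.ofReal (‖c k‖ ^ 2 * r ^ (2 * k)) := by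
  have hp : ∀ θ : ℝ, Complex.polarCoord.symm (r, θ) = r * Complex.exp (Complex.I * θ) := by
    intro θ
    rw [Complex.polarCoord_symm_apply, mul_comm Complex.I, Complex.exp_mul_I]
    simp
  have hsn : Summable fun k => ‖c k * (r : ℂ) ^ k‖ := (hF r).summable.norm
  have hF2 : ∀ θ : ℝ, F (Complex.polarCoord.symm (r, θ)) =
      ∑' k : ℕ, (c k * (r : ℂ) ^ k) * Complex.exp (Complex.I * k * θ) := by
    intro θ
    rw [hp, ← (hF _).tsum_eq]
    refine tsum_congr fun k => ?_
    rw [mul_pow, ← Complex.exp_nat_mul, mul_assoc]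
    congr 3
    ring
  have hcont : Continuous fun θ : ℝ => ‖F (Complex.polarCoord.symm (r, θ))‖ ^ 2 := by
    simp_rw [hp]
    fun_prop
  have hpars := fk_parseval _ hsn
  simp_rw [← hF2] at hpars
  rw [intervalIntegral.integral_of_le (by linarith [Real.pi_pos]), integral_Ioc_eq_integral_Ioo] at hpars
  have h1 : Summable fun k => ‖c k * (r : ℂ) ^ k‖ ^ 2 := by
    refine Summable.of_norm_bounded_eventually_nat (g := fun k => ‖c k * (r : ℂ) ^ k‖) hsn ?_
    have := hsn.tendsto_atTop_zero.eventually (gt_mem_nhds one_pos)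
    filter_upwards [this] with k hk
    rw [Real.norm_of_nonneg (by positivity), sq]
    exact mul_le_of_le_one_left (norm_nonneg _) hk.le
  rw [← ofReal_integral_eq_lintegral_ofReal, hpars, ENNReal.ofReal_mul (by positivity),
    ENNReal.ofReal_tsum_of_nonneg (fun _ => by positivity) h1]
  · congr 2
    funext k
    rw [norm_mul, norm_pow, Complex.norm_real, Real.norm_of_nonneg hr.le, mul_pow, ← pow_mul, mul_comm k]
  · exact hcont.integrableOn_Icc.mono_set Set.Ioo_subset_Icc_self
  · exact Filter.Eventually.of_forall fun t => by simp only [Pi.zero_apply]; positivity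

lemma fk_meas (a : ℝ) : Measurable (fockWeight a) := by
  unfold fockWeight
  fun_prop

lemma fk_lnorm (a : ℝ) (ha : 0 < a) (c : ℕ → ℂ) (F : ℂ → ℂ) (hFc : Continuous F)
    (hF : ∀ z, HasSum (fun k => c k * z ^ k) (F z)) :
    ∫⁻ w, ENNReal.ofReal (‖F w‖ ^ 2 * fockWeight a w) =
      ENNReal.ofReal (2 * Real.pi * Real.sqrt (2 * Real.pi * a)) *
        ∑' k, ENNReal.ofReal (‖c k‖ ^ 2 * Real.exp (2 * a * ((k : ℝ) + 1) ^ 2)) := by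
  rw [← Complex.lintegral_comp_polarCoord_symm]
  have hcs : Continuous fun p : ℝ × ℝ => Complex.polarCoord.symm p := by
    simp_rw [Complex.polarCoord_symm_apply]
    fun_prop
  rw [polarCoord_target, Measure.volume_eq_prod, ← Measure.prod_restrict, lintegral_prod]
  swap
  · refine Measurable.aemeasurable ?_
    have h1 := (fk_meas a).comp hcs.measurable
    have h2 := (hFc.comp hcs).measurable
    simp only [smul_eq_mul]
    refine Measurable.mul (by fun_prop) (ENNReal.measurable_ofReal.comp ?_)
    exact (h2.norm.pow_const 2).mul h1
  have hinner : ∀ r ∈ Set.Ioi (0 : ℝ), ∫⁻ θ in Set.Ioo (-Real.pi) Real.pi,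
      ENNReal.ofReal (r, θ).1 • ENNReal.ofReal (‖F (Complex.polarCoord.symm (r, θ))‖ ^ 2 *
        fockWeight a (Complex.polarCoord.symm (r, θ))) =
      ENNReal.ofReal (2 * Real.pi) * ∑' k, ENNReal.ofReal (‖c k‖ ^ 2) *
        ENNReal.ofReal (r ^ (2 * k + 1) * Real.exp (-(Real.log r) ^ 2 / (2 * a))) := by
    intro r hr
    have hr : 0 < r := hr
    have hw : ∀ θ : ℝ, fockWeight a (Complex.polarCoord.symm (r, θ)) =
        Real.exp (-(Real.log r) ^ 2 / (2 * a)) := by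
      intro θ
      rw [fockWeight, Complex.norm_polarCoord_symm, abs_of_pos hr]
    have e1 : ∀ θ : ℝ, ENNReal.ofReal (r, θ).1 • ENNReal.ofReal (‖F (Complex.polarCoord.symm (r, θ))‖ ^ 2 *
        fockWeight a (Complex.polarCoord.symm (r, θ))) =
        ENNReal.ofReal (r * Real.exp (-(Real.log r) ^ 2 / (2 * a))) *
          ENNReal.ofReal (‖F (Complex.polarCoord.symm (r, θ))‖ ^ 2) := by
      intro θ
      rw [hw, smul_eq_mul, ← ENNReal.ofReal_mul hr.le, ← ENNReal.ofReal_mul (by positivity)]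
      congr 1
      ring
    simp_rw [e1]
    rw [lintegral_const_mul' _ _ ENNReal.ofReal_ne_top, fk_circle c F hFc hF r hr, mul_left_comm]
    congr 1
    rw [← ENNReal.tsum_mul_left]
    refine tsum_congr fun k => ?_
    rw [← ENNReal.ofReal_mul (by positivity), ← ENNReal.ofReal_mul (by positivity)]
    congr 1
    ring
  rw [setLIntegral_congr_fun measurableSet_Ioi hinner, lintegral_const_mul' _ _ ENNReal.ofReal_ne_top,
    lintegral_tsum (fun k => by
      refine Measurable.aemeasurable ?_
      have := Real.measurable_log
      fun_prop)]
  rw [ENNReal.ofReal_mul (p := 2 * Real.pi) (by positivity), mul_assoc]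
  congr 1
  rw [← ENNReal.tsum_mul_left]
  refine tsum_congr fun k => ?_
  rw [lintegral_const_mul' _ _ ENNReal.ofReal_ne_top, fk_radial a ha,
    ← ENNReal.ofReal_mul (by positivity), ← ENNReal.ofReal_mul (by positivity)]
  congr 1
  ring

/-- norm identity for members. -/
lemma fk_norm_of_mem (a : ℝ) (ha : 0 < a) (c : ℕ → ℂ) (F : ℂ → ℂ) (hM : MemFock a F)
    (hF : ∀ z, HasSum (fun k => c k * z ^ k) (F z)) :
    HasSum (fun k : ℕ => ‖c k‖ ^ 2 * Real.exp (2 * a * ((k : ℝ) + 1) ^ 2)) (fockNormSq a F) := by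
  have hl := fk_lnorm a ha c F hM.1.continuous hF
  have hnn : ∀ w, 0 ≤ ‖F w‖ ^ 2 * fockWeight a w := fun w => by
    unfold fockWeight; positivity
  rw [← ofReal_integral_eq_lintegral_ofReal hM.2 (Filter.Eventually.of_forall hnn)] at hl
  have hpi := Real.pi_pos
  have hs : 0 < Real.sqrt (2 * Real.pi * a) := Real.sqrt_pos.2 (by positivity)
  have hne : ENNReal.ofReal (2 * Real.pi * Real.sqrt (2 * Real.pi * a)) ≠ 0 := by
    rw [Ne, ENNReal.ofReal_eq_zero, not_le]; positivity
  have hfin : ∑' k, ENNReal.ofReal (‖c k‖ ^ 2 * Real.exp (2 * a * ((k : ℝ) + 1) ^ 2)) ≠ ⊤ := by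
    intro h
    rw [h, ENNReal.mul_top hne] at hl
    exact ENNReal.ofReal_ne_top hl
  have hsm : Summable fun k : ℕ => ‖c k‖ ^ 2 * Real.exp (2 * a * ((k : ℝ) + 1) ^ 2) := by
    have := ENNReal.summable_toReal hfin
    refine this.congr fun k => ?_
    rw [ENNReal.toReal_ofReal (by positivity)]
  rw [← ENNReal.ofReal_tsum_of_nonneg (fun _ => by positivity) hsm, ← ENNReal.ofReal_mul (by positivity),
    ENNReal.ofReal_eq_ofReal_iff (integral_nonneg hnn) 
      (mul_nonneg (by positivity) (tsum_nonneg fun _ => by positivity))] at hl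
  have : fockNormSq a F = ∑' k : ℕ, ‖c k‖ ^ 2 * Real.exp (2 * a * ((k : ℝ) + 1) ^ 2) := by
    rw [fockNormSq, integral_div, hl]
    field_simp
  rw [this]
  exact hsm.hasSum

lemma fk_mem (a : ℝ) (ha : 0 < a) (c : ℕ → ℂ) (F : ℂ → ℂ) (hd : Differentiable ℂ F)
    (hF : ∀ z, HasSum (fun k => c k * z ^ k) (F z))
    (hsm : Summable fun k : ℕ => ‖c k‖ ^ 2 * Real.exp (2 * a * ((k : ℝ) + 1) ^ 2)) : MemFock a F := by
  refine ⟨hd, ⟨?_, ?_⟩⟩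
  · exact ((hd.continuous.norm.pow 2).measurable.mul (fk_meas a)).aestronglyMeasurable
  · have hnn : ∀ w, 0 ≤ ‖F w‖ ^ 2 * fockWeight a w := fun w => by
      unfold fockWeight; positivity
    rw [hasFiniteIntegral_iff_ofReal (Filter.Eventually.of_forall hnn), fk_lnorm a ha c F hd.continuous hF,
      ← ENNReal.ofReal_tsum_of_nonneg (fun _ => by positivity) hsm]
    exact ENNReal.mul_lt_top ENNReal.ofReal_lt_top ENNReal.ofReal_lt_top

lemma fk_summable_int (a : ℝ) (ha : 0 < a) : Summable fun d : ℤ => Real.exp (-a * (d : ℝ) ^ 2) := by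
  have hnat : Summable fun n : ℕ => Real.exp (-a * (n : ℝ) ^ 2) := by
    have h := Real.summable_exp_nat_mul_iff.2 (show -a < 0 by linarith)
    refine Summable.of_nonneg_of_le (fun _ => (Real.exp_pos _).le) (fun n => ?_) h
    refine Real.exp_le_exp.2 ?_
    have : (n : ℝ) ≤ (n : ℝ) ^ 2 := by exact_mod_cast Nat.le_self_pow two_ne_zero n
    nlinarith
  refine Summable.of_nat_of_neg ?_ ?_
  · simpa using hnat
  · simpa using hnat

lemma fk_row (a : ℝ) (ha : 0 < a) (m : ℕ) :
    Summable (fun k : ℕ => Real.exp (-a * ((m : ℝ) - k) ^ 2)) ∧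
    ∑' k : ℕ, Real.exp (-a * ((m : ℝ) - k) ^ 2) ≤ ∑' d : ℤ, Real.exp (-a * (d : ℝ) ^ 2) := by
  have hinj : Function.Injective fun k : ℕ => (m : ℤ) - k := by
    intro x y h
    simp only at h
    omega
  have h := fk_summable_int a ha
  have e : (fun k : ℕ => Real.exp (-a * ((m : ℝ) - k) ^ 2)) =
      (fun d : ℤ => Real.exp (-a * (d : ℝ) ^ 2)) ∘ fun k : ℕ => (m : ℤ) - k := by
    funext k
    simp
  rw [e]
  refine ⟨h.comp_injective hinj, ?_⟩
  exact tsum_comp_le_tsum_of_inj h (fun d => (Real.exp_pos _).le) hinj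

lemma fk_schur (a : ℝ) (ha : 0 < a) (b : ℕ → ℂ) (hb : Summable fun k => ‖b k‖ ^ 2) :
    (∀ m : ℕ, Summable fun k : ℕ => ((Real.exp (-a * ((m : ℝ) - k) ^ 2) : ℝ) : ℂ) * b k) ∧
    ∀ s : Finset ℕ, ∑ m ∈ s, ‖∑' k : ℕ, ((Real.exp (-a * ((m : ℝ) - k) ^ 2) : ℝ) : ℂ) * b k‖ ^ 2 ≤
      (∑' d : ℤ, Real.exp (-a * (d : ℝ) ^ 2)) ^ 2 * ∑' k, ‖b k‖ ^ 2 := by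
  set G := ∑' d : ℤ, Real.exp (-a * (d : ℝ) ^ 2) with hG
  have hG0 : 0 ≤ G := tsum_nonneg fun d => (Real.exp_pos _).le
  set g : ℕ → ℕ → ℝ := fun m k => Real.exp (-a * ((m : ℝ) - k) ^ 2) with hg
  have hg0 : ∀ m k, 0 ≤ g m k := fun m k => (Real.exp_pos _).le
  have hg1 : ∀ m k, g m k ≤ 1 := fun m k => by
    refine Real.exp_le_one_iff.2 ?_
    have := sq_nonneg ((m : ℝ) - k)
    nlinarith
  have hsymm : ∀ m k, g m k = g k m := fun m k => by
    simp only [hg]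
    congr 2
    ring
  have hs2 : ∀ m, Summable fun k => g m k * ‖b k‖ ^ 2 := fun m =>
    Summable.of_nonneg_of_le (fun k => mul_nonneg (hg0 m k) (sq_nonneg _))
      (fun k => mul_le_of_le_one_left (sq_nonneg _) (hg1 m k)) hb
  have hs1 : ∀ m, Summable fun k => g m k * ‖b k‖ := fun m => by
    refine Summable.of_nonneg_of_le (fun k => mul_nonneg (hg0 m k) (norm_nonneg _))
      (fun k => ?_) ((fk_row a ha m).1.add (hs2 m))
    have : ‖b k‖ ≤ 1 + ‖b k‖ ^ 2 := by nlinarith [sq_nonneg (‖b k‖ - 1), norm_nonneg (b k)]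
    have := mul_le_mul_of_nonneg_left this (hg0 m k)
    simp only [hg] at this ⊢
    linarith
  have hn : ∀ m k, ‖((g m k : ℝ) : ℂ) * b k‖ = g m k * ‖b k‖ := fun m k => by
    rw [norm_mul, Complex.norm_real, Real.norm_of_nonneg (hg0 m k)]
  refine ⟨fun m => Summable.of_norm ((hs1 m).congr fun k => (hn m k).symm), fun s => ?_⟩
  have hcs : ∀ m, ‖∑' k : ℕ, ((g m k : ℝ) : ℂ) * b k‖ ^ 2 ≤ G * ∑' k, g m k * ‖b k‖ ^ 2 := by
    intro m
    have h1 : ‖∑' k : ℕ, ((g m k : ℝ) : ℂ) * b k‖ ≤ ∑' k, g m k * ‖b k‖ :=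
      tsum_of_norm_bounded (hs1 m).hasSum fun k => (hn m k).le
    have h2 : (∑' k, g m k * ‖b k‖) ^ 2 ≤ (∑' k, g m k) * ∑' k, g m k * ‖b k‖ ^ 2 := by
      refine le_of_tendsto_of_tendsto' (((hs1 m).hasSum).pow 2)
        (Filter.Tendsto.mul (fk_row a ha m).1.hasSum (hs2 m).hasSum) fun t => ?_
      refine Finset.sum_sq_le_sum_mul_sum_of_sq_le_mul t (fun k _ => hg0 m k)
        (fun k _ => mul_nonneg (hg0 m k) (sq_nonneg _)) fun k _ => le_of_eq ?_
      simp only [hg]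
      ring
    calc _ ≤ (∑' k, g m k * ‖b k‖) ^ 2 := by gcongr
      _ ≤ _ := h2
      _ ≤ _ := mul_le_mul_of_nonneg_right (fk_row a ha m).2
          (tsum_nonneg fun k => mul_nonneg (hg0 m k) (sq_nonneg _))
  calc _ ≤ ∑ m ∈ s, G * ∑' k, g m k * ‖b k‖ ^ 2 := Finset.sum_le_sum fun m _ => hcs m
    _ = G * ∑' k, ∑ m ∈ s, g m k * ‖b k‖ ^ 2 := by
        rw [← Finset.mul_sum, Summable.tsum_finsetSum fun m _ => hs2 m]
    _ ≤ G * ∑' k, G * ‖b k‖ ^ 2 := by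
        refine mul_le_mul_of_nonneg_left ?_ hG0
        refine Summable.tsum_le_tsum (fun k => ?_) (summable_sum fun m _ => hs2 m) (hb.mul_left G)
        rw [← Finset.sum_mul]
        refine mul_le_mul_of_nonneg_right ?_ (sq_nonneg _)
        simp_rw [hsymm _ k]
        exact ((fk_row a ha k).1.sum_le_tsum s fun m _ => hg0 k m).trans (fk_row a ha k).2
    _ = _ := by rw [tsum_mul_left]; ring

lemma fk_lp_summable (b : lp (fun _ : ℕ => ℂ) 2) : HasSum (fun k => ‖b k‖ ^ 2) (‖b‖ ^ 2) := by
  have := lp.hasSum_norm (p := 2) (by norm_num) b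
  simpa using this

lemma fk_operator (a : ℝ) (ha : 0 < a) :
    ∃ T : lp (fun _ : ℕ => ℂ) 2 →L[ℂ] lp (fun _ : ℕ => ℂ) 2, ∀ (b : lp (fun _ : ℕ => ℂ) 2) (m : ℕ),
      HasSum (fun k : ℕ => ((Real.exp (-a * ((m : ℝ) - k) ^ 2) : ℝ) : ℂ) * b k) (T b m) := by
  have hS := fun b : lp (fun _ : ℕ => ℂ) 2 => fk_schur a ha b (fk_lp_summable b).summable
  set G := ∑' d : ℤ, Real.exp (-a * (d : ℝ) ^ 2) with hG
  have hG0 : 0 ≤ G := tsum_nonneg fun d => (Real.exp_pos _).le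
  have hmem : ∀ b : lp (fun _ : ℕ => ℂ) 2,
      Memℓp (fun m : ℕ => ∑' k : ℕ, ((Real.exp (-a * ((m : ℝ) - k) ^ 2) : ℝ) : ℂ) * b k) 2 := by
    intro b
    refine memℓp_gen' (C := G ^ 2 * ∑' k, ‖b k‖ ^ 2) fun s => ?_
    simpa using (hS b).2 s
  let T0 : lp (fun _ : ℕ => ℂ) 2 →ₗ[ℂ] lp (fun _ : ℕ => ℂ) 2 :=
    { toFun := fun b => ⟨_, hmem b⟩
      map_add' := fun x y => by
        ext m
        simp only [lp.coeFn_add, Pi.add_apply]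
        rw [← Summable.tsum_add ((hS x).1 m) ((hS y).1 m)]
        exact tsum_congr fun k => by ring
      map_smul' := fun r x => by
        ext m
        simp only [lp.coeFn_smul, Pi.smul_apply, smul_eq_mul, RingHom.id_apply]
        rw [← tsum_mul_left]
        exact tsum_congr fun k => by ring }
  refine ⟨T0.mkContinuous G fun b => ?_, fun b m => ?_⟩
  · refine lp.norm_le_of_forall_sum_le (by norm_num) (by positivity) fun s => ?_
    have := (hS b).2 s
    rw [(fk_lp_summable b).tsum_eq, ← mul_pow] at this
    simpa [T0] using this
  · exact ((hS b).1 m).hasSum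

lemma fk_coercive (a : ℝ) (ha : 0 < a) (T : lp (fun _ : ℕ => ℂ) 2 →L[ℂ] lp (fun _ : ℕ => ℂ) 2)
    (hT : ∀ (b : lp (fun _ : ℕ => ℂ) 2) (m : ℕ),
      HasSum (fun k : ℕ => ((Real.exp (-a * ((m : ℝ) - k) ^ 2) : ℝ) : ℂ) * b k) (T b m)) :
    ∃ c > 0, ∀ b, c * ‖b‖ ^ 2 ≤ (inner ℂ (T b) b).re := by
  classical
  have hpi := Real.pi_pos
  refine ⟨2 * Real.pi * Real.exp (-Real.pi ^ 2 / (4 * a)) / Real.sqrt (4 * Real.pi * a), by positivity, fun b => ?_⟩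
  set c := 2 * Real.pi * Real.exp (-Real.pi ^ 2 / (4 * a)) / Real.sqrt (4 * Real.pi * a) with hc
  have hcl : IsClosed {x : lp (fun _ : ℕ => ℂ) 2 | c * ‖x‖ ^ 2 ≤ (inner ℂ (T x) x).re} := by
    refine isClosed_le (by fun_prop) ?_
    exact Complex.continuous_re.comp (T.continuous.inner continuous_id)
  refine hcl.mem_of_tendsto (lp.hasSum_single (by norm_num) b) (Filter.Eventually.of_forall fun s => ?_)
  simp only [Set.mem_ofPred_eq]
  set x : lp (fun _ : ℕ => ℂ) 2 := ∑ k ∈ s, lp.single 2 k (b k) with hx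
  have hxk : ∀ k, x k = if k ∈ s then b k else 0 := by
    intro k
    rw [hx, lp.coeFn_sum, Finset.sum_apply]
    simp [lp.single_apply, Pi.single_apply]
  have hTx : ∀ m, T x m = ∑ k ∈ s, ((Real.exp (-a * ((m : ℝ) - k) ^ 2) : ℝ) : ℂ) * b k := by
    intro m
    rw [← (hT x m).tsum_eq, tsum_eq_sum (s := s) (fun k hk => by simp [hxk, hk])]
    exact Finset.sum_congr rfl fun k hk => by simp [hxk, hk]
  have hnx : ‖x‖ ^ 2 = ∑ k ∈ s, ‖b k‖ ^ 2 := by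
    rw [← (fk_lp_summable x).tsum_eq, tsum_eq_sum (s := s) (fun k hk => by simp [hxk, hk])]
    exact Finset.sum_congr rfl fun k hk => by simp [hxk, hk]
  have hin : inner ℂ (T x) x = ∑ k ∈ s, ∑ j ∈ s, b k * conj (b j) * (Real.exp (-a * ((k : ℝ) - j) ^ 2) : ℝ) := by
    rw [lp.inner_eq_tsum, tsum_eq_sum (s := s) (fun k hk => by simp [hxk, hk])]
    refine Finset.sum_congr rfl fun k hk => ?_
    rw [hTx, hxk, if_pos hk, RCLike.inner_apply, map_sum, Finset.mul_sum]
    refine Finset.sum_congr rfl fun j hj => ?_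
    rw [map_mul, Complex.conj_ofReal]
    ring
  rw [hnx, hin]
  exact fk_quad a ha s b

/-- Reindexing of the sequence. -/
def fkEquiv : ℕ ≃ {n : ℕ // 1 ≤ n} where
  toFun m := ⟨m + 1, Nat.le_add_left 1 m⟩
  invFun n := n.1 - 1
  left_inv m := by simp
  right_inv n := by
    ext
    simp only
    have := n.2
    omega

lemma fk_weight (a : ℝ) (ha : 0 < a) (n : ℕ) (t : ℝ) :
    fockSampleWeight a ((Real.exp (2 * a * n) : ℝ) : ℂ) * t ^ 2 =
      (1 + Real.exp (-(4 * a * n))) * (Real.exp (2 * a * n - a * n ^ 2) * t) ^ 2 := by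
  rw [fockSampleWeight, fockPhi, Complex.norm_real, Real.norm_of_nonneg (Real.exp_pos _).le, Real.log_exp,
    mul_pow (Real.exp _) t, ← mul_assoc]
  congr 1
  rw [← Real.exp_nat_mul, ← Real.exp_nat_mul, add_mul, add_mul, one_mul, one_mul, ← Real.exp_add, ← Real.exp_add,
    add_comm]
  congr 2
  · push_cast
    field_simp
    ring
  · push_cast
    field_simp
    ring

lemma fk_eval (a : ℝ) (b : ℕ → ℂ) (F : ℂ → ℂ)
    (hF : ∀ z, HasSum (fun k : ℕ => ((Real.exp (-a * ((k : ℝ) + 1) ^ 2) : ℝ) : ℂ) * b k * z ^ k) (F z)) (m : ℕ) :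
    HasSum (fun k : ℕ => ((Real.exp (-a * ((m : ℝ) - k) ^ 2) : ℝ) : ℂ) * b k)
      (((Real.exp (2 * a * (m + 1 : ℕ) - a * (m + 1 : ℕ) ^ 2) : ℝ) : ℂ) * F ((Real.exp (2 * a * (m + 1 : ℕ)) : ℝ) : ℂ)) := by
  have h := (hF ((Real.exp (2 * a * (m + 1 : ℕ)) : ℝ) : ℂ)).mul_left
    (((Real.exp (2 * a * (m + 1 : ℕ) - a * (m + 1 : ℕ) ^ 2) : ℝ) : ℂ))
  refine h.congr_fun fun k => ?_
  have e : ∀ x y z w : ℂ, x * (y * w * z) = x * y * z * w := fun x y z w => by ring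
  rw [e, ← Complex.ofReal_pow, ← Complex.ofReal_mul, ← Complex.ofReal_mul,
    ← Real.exp_nat_mul, ← Real.exp_add, ← Real.exp_add]
  congr 3
  push_cast
  ring

lemma fk_entire (a : ℝ) (ha : 0 < a) (b : ℕ → ℂ) (M : ℝ) (hb : ∀ k, ‖b k‖ ≤ M) :
    ∃ F : ℂ → ℂ, Differentiable ℂ F ∧
      ∀ z, HasSum (fun k : ℕ => ((Real.exp (-a * ((k : ℝ) + 1) ^ 2) : ℝ) : ℂ) * b k * z ^ k) (F z) := by
  have hM : 0 ≤ M := (norm_nonneg _).trans (hb 0)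
  have key : ∀ N : ℕ, ∃ u : ℕ → ℝ, Summable u ∧ ∀ (k : ℕ) (z : ℂ), z ∈ Metric.ball (0 : ℂ) (Real.exp (2 * a * N)) →
      ‖((Real.exp (-a * ((k : ℝ) + 1) ^ 2) : ℝ) : ℂ) * b k * z ^ k‖ ≤ u k := by
    intro N
    refine ⟨fun k => M * Real.exp (a * N ^ 2 - 2 * a * N) * Real.exp (-a * ((N : ℝ) - (k + 1 : ℕ)) ^ 2), ?_, ?_⟩
    · exact ((summable_nat_add_iff 1).2 (fk_row a ha N).1).mul_left _
    · intro k z hz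
      rw [mem_ball_zero_iff] at hz
      rw [norm_mul, norm_mul, norm_pow, Complex.norm_real, Real.norm_of_nonneg (Real.exp_pos _).le]
      calc _ ≤ Real.exp (-a * ((k : ℝ) + 1) ^ 2) * M * (Real.exp (2 * a * N)) ^ k := by
            gcongr
            exact hb k
        _ = M * (Real.exp (-a * ((k : ℝ) + 1) ^ 2) * (Real.exp (2 * a * N)) ^ k) := by ring
        _ = M * (Real.exp (a * N ^ 2 - 2 * a * N) * Real.exp (-a * ((N : ℝ) - (k + 1 : ℕ)) ^ 2)) := by
            rw [← Real.exp_nat_mul, ← Real.exp_add, ← Real.exp_add]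
            congr 2
            push_cast
            ring
        _ = _ := by ring
  have hex : ∀ z : ℂ, ∃ N : ℕ, z ∈ Metric.ball (0 : ℂ) (Real.exp (2 * a * N)) := by
    intro z
    obtain ⟨N, hN⟩ := exists_nat_gt (‖z‖ / (2 * a))
    refine ⟨N, ?_⟩
    rw [mem_ball_zero_iff]
    rw [div_lt_iff₀ (by positivity)] at hN
    have := Real.add_one_le_exp (2 * a * N)
    linarith
  refine ⟨fun z => ∑' k : ℕ, ((Real.exp (-a * ((k : ℝ) + 1) ^ 2) : ℝ) : ℂ) * b k * z ^ k, ?_, ?_⟩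
  · intro z
    obtain ⟨N, hN⟩ := hex z
    obtain ⟨u, hu, hbd⟩ := key N
    have := Complex.differentiableOn_tsum_of_summable_norm hu (fun k => by fun_prop) Metric.isOpen_ball hbd
    exact this.differentiableAt (Metric.isOpen_ball.mem_nhds hN)
  · intro z
    obtain ⟨N, hN⟩ := hex z
    obtain ⟨u, hu, hbd⟩ := key N
    exact (Summable.of_norm_bounded hu fun k => hbd k z hN).hasSum

lemma fk_interp (a : ℝ) (ha : 0 < a) :
    FockInterpolating a (fun n : ℕ => ((Real.exp (2 * a * n) : ℝ) : ℂ)) := by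
  intro v hv
  obtain ⟨T, hT⟩ := fk_operator a ha
  obtain ⟨c, hc, hco⟩ := fk_coercive a ha T hT
  have hunit : IsUnit T := by
    refine ContinuousLinearMap.isUnit_of_forall_le_norm_inner_map T (c := ⟨c, hc.le⟩) hc fun x => ?_
    rw [mul_comm]
    exact (hco x).trans (Complex.re_le_norm _)
  have hsurj : Function.Surjective T := (ContinuousLinearMap.isUnit_iff_bijective.1 hunit).2
  have hv2 := (fkEquiv.summable_iff (f := fun n : {n : ℕ // 1 ≤ n} =>
    fockSampleWeight a ((fun n : ℕ => ((Real.exp (2 * a * n) : ℝ) : ℂ)) n) * ‖v n‖ ^ 2)).2 hv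
  have hy : Memℓp (fun m : ℕ => ((Real.exp (2 * a * (m + 1 : ℕ) - a * (m + 1 : ℕ) ^ 2) : ℝ) : ℂ) * v (m + 1)) 2 := by
    refine memℓp_gen ?_
    refine Summable.of_nonneg_of_le (fun m => by positivity) (fun m => ?_) hv2
    simp only [Function.comp_apply, fkEquiv, Equiv.coe_fn_mk]
    rw [fk_weight a ha, norm_mul, Complex.norm_real, Real.norm_of_nonneg (Real.exp_pos _).le]
    have := Real.exp_pos (-(4 * a * (m + 1 : ℕ)))
    simp only [ENNReal.toReal_ofNat, Real.rpow_ofNat]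
    refine le_mul_of_one_le_left (sq_nonneg _) (by linarith)
  obtain ⟨b, hb⟩ := hsurj ⟨_, hy⟩
  obtain ⟨F, hFd, hF⟩ := fk_entire a ha b ‖b‖ (fun k => lp.norm_apply_le_norm (by norm_num) b k)
  refine ⟨F, fk_mem a ha _ F hFd hF ?_, ?_⟩
  · refine (fk_lp_summable b).summable.congr fun k => ?_
    rw [norm_mul, Complex.norm_real, Real.norm_of_nonneg (Real.exp_pos _).le, mul_pow, ← Real.exp_nat_mul,
      mul_right_comm, ← Real.exp_add]
    have : ((2 : ℕ) : ℝ) * (-a * ((k : ℝ) + 1) ^ 2) + 2 * a * ((k : ℝ) + 1) ^ 2 = 0 := by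
      push_cast; ring
    rw [this, Real.exp_zero, one_mul]
  · intro n hn
    obtain ⟨m, rfl⟩ : ∃ m, n = m + 1 := ⟨n - 1, by omega⟩
    have h1 := (fk_eval a b F hF m).unique (hT b m)
    rw [hb] at h1
    refine mul_left_cancel₀ ?_ h1
    exact_mod_cast (Real.exp_pos _).ne'

lemma fk_sampling (a : ℝ) (ha : 0 < a) :
    FockSampling a (fun n : ℕ => ((Real.exp (2 * a * n) : ℝ) : ℂ)) := by
  obtain ⟨T, hT⟩ := fk_operator a ha
  obtain ⟨c, hc, hco⟩ := fk_coercive a ha T hT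
  refine ⟨c ^ 2, by positivity, 2 * (‖T‖ ^ 2 + 1), by positivity, fun F hM => ?_⟩
  set C : ℕ → ℂ := fun k => (k.factorial : ℂ)⁻¹ * iteratedDeriv k F 0 with hC
  have hF : ∀ z, HasSum (fun k => C k * z ^ k) (F z) := by
    intro z
    refine (Complex.hasSum_taylorSeries_of_entire hM.1 0 z).congr_fun fun k => ?_
    simp only [hC, smul_eq_mul, sub_zero]
    ring
  have hN := fk_norm_of_mem a ha C F hM hF
  set b0 : ℕ → ℂ := fun k => ((Real.exp (a * ((k : ℝ) + 1) ^ 2) : ℝ) : ℂ) * C k with hb0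
  have hb0n : ∀ k, ‖b0 k‖ ^ 2 = ‖C k‖ ^ 2 * Real.exp (2 * a * ((k : ℝ) + 1) ^ 2) := by
    intro k
    simp only [hb0]
    rw [norm_mul, Complex.norm_real, Real.norm_of_nonneg (Real.exp_pos _).le, mul_pow, ← Real.exp_nat_mul, mul_comm]
    congr 2
    push_cast
    ring
  simp_rw [← hb0n] at hN
  have hmem : Memℓp b0 2 := memℓp_gen (by simpa using hN.summable)
  set b : lp (fun _ : ℕ => ℂ) 2 := ⟨b0, hmem⟩ with hb
  have hbn : ‖b‖ ^ 2 = fockNormSq a F := (fk_lp_summable b).unique hN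
  have hF2 : ∀ z, HasSum (fun k : ℕ => ((Real.exp (-a * ((k : ℝ) + 1) ^ 2) : ℝ) : ℂ) * b k * z ^ k) (F z) := by
    intro z
    refine (hF z).congr_fun fun k => ?_
    simp only [hb, hb0]
    rw [← mul_assoc, ← Complex.ofReal_mul, ← Real.exp_add]
    simp
  have hTb : ∀ m, T b m = ((Real.exp (2 * a * (m + 1 : ℕ) - a * (m + 1 : ℕ) ^ 2) : ℝ) : ℂ) *
      F ((Real.exp (2 * a * (m + 1 : ℕ)) : ℝ) : ℂ) := fun m => (hT b m).unique (fk_eval a b F hF2 m)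
  have hsumT := fk_lp_summable (T b)
  have hterm : ∀ m : ℕ, fockSampleWeight a ((Real.exp (2 * a * (m + 1 : ℕ)) : ℝ) : ℂ) *
      ‖F ((Real.exp (2 * a * (m + 1 : ℕ)) : ℝ) : ℂ)‖ ^ 2 =
      (1 + Real.exp (-(4 * a * (m + 1 : ℕ)))) * ‖T b m‖ ^ 2 := by
    intro m
    rw [fk_weight a ha, hTb, norm_mul, Complex.norm_real, Real.norm_of_nonneg (Real.exp_pos _).le]
  have heq : (∑' n : {n : ℕ // 1 ≤ n}, fockSampleWeight a ((fun n : ℕ => ((Real.exp (2 * a * n) : ℝ) : ℂ)) n) *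
      ‖F ((fun n : ℕ => ((Real.exp (2 * a * n) : ℝ) : ℂ)) n)‖ ^ 2) =
      ∑' m : ℕ, (1 + Real.exp (-(4 * a * (m + 1 : ℕ)))) * ‖T b m‖ ^ 2 := by
    rw [← fkEquiv.tsum_eq]
    exact tsum_congr fun m => hterm m
  have hup : ∀ m : ℕ, (1 + Real.exp (-(4 * a * (m + 1 : ℕ)))) * ‖T b m‖ ^ 2 ≤ 2 * ‖T b m‖ ^ 2 := by
    intro m
    have : Real.exp (-(4 * a * (m + 1 : ℕ))) ≤ 1 := Real.exp_le_one_iff.2 (by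
      have : 0 ≤ 4 * a * ((m + 1 : ℕ) : ℝ) := by positivity
      linarith)
    exact mul_le_mul_of_nonneg_right (by linarith) (sq_nonneg _)
  have hlo : ∀ m : ℕ, ‖T b m‖ ^ 2 ≤ (1 + Real.exp (-(4 * a * (m + 1 : ℕ)))) * ‖T b m‖ ^ 2 := by
    intro m
    have := Real.exp_pos (-(4 * a * (m + 1 : ℕ)))
    exact le_mul_of_one_le_left (sq_nonneg _) (by linarith)
  have hs := Summable.of_nonneg_of_le (fun m => (sq_nonneg _).trans (hlo m)) hup (hsumT.summable.mul_left 2)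
  rw [heq, ← hbn]
  constructor
  · refine le_trans ?_ (hsumT.summable.tsum_le_tsum hlo hs)
    rw [hsumT.tsum_eq, ← mul_pow]
    refine pow_le_pow_left₀ (by positivity) ?_ 2
    have h1 : c * ‖b‖ ^ 2 ≤ ‖T b‖ * ‖b‖ :=
      (hco b).trans ((Complex.re_le_norm _).trans (norm_inner_le_norm _ _))
    rcases (norm_nonneg b).eq_or_lt with h0 | h0
    · rw [← h0]; simp
    · refine le_of_mul_le_mul_right ?_ h0
      linarith
  · refine (hs.tsum_le_tsum hup (hsumT.summable.mul_left 2)).trans ?_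
    rw [tsum_mul_left, hsumT.tsum_eq]
    have h1 := pow_le_pow_left₀ (norm_nonneg _) (T.le_opNorm b) 2
    rw [mul_pow] at h1
    nlinarith [sq_nonneg ‖b‖]

/-- from [BL]: the sequence `{e^{2an}}_{n≥1}` is a complete interpolating
sequence for the small Fock space `𝓕_a`. -/
theorem statement16 (a : ℝ) (ha : 0 < a) :
    FockCIS a (fun n : ℕ => ((Real.exp (2 * a * n) : ℝ) : ℂ)) := by
  exact ⟨fk_sampling a ha, fk_interp a ha⟩
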